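/- The probability that a uniformly random multiset of d elements drawn from a d-element set contains some element with multiplicity at least α is at most d · (1/2)^(α-1) · d/(2d-1); in particular, for α = ⌈2 log₂ d + 1⌉ this probability is at most 1/d. -/

import Mathlib

lemma card_bound (d α : ℕ) (hα : α ≤ d) :
    Nat.card {m : Sym (Fin d) d // ∃ i : Fin d, α ≤ Multiset.count i (m : Multiset (Fin d))}
      ≤ d * (2 * d - α - 1).choose (d - α) := by
  classical
  let f : Fin d × Sym (Fin d) (d - α) →
      {m : Sym (Fin d) d // ∃ i : Fin d, α ≤ Multiset.count i (m : Multiset (Fin d))} :=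
    fun p => ⟨⟨p.2.1 + Multiset.replicate α p.1, by
      have := p.2.2
      simp only [Multiset.card_add, Multiset.card_replicate]
      omega⟩, p.1, by
        change α ≤ Multiset.count p.1 (p.2.1 + Multiset.replicate α p.1)
        simp⟩
  have hf : Function.Surjective f := by
    rintro ⟨⟨m, hm⟩, i, hi⟩
    change α ≤ Multiset.count i m at hi
    have hle : Multiset.replicate α i ≤ m := Multiset.le_count_iff_replicate_le.1 hi
    refine ⟨(i, ⟨m - Multiset.replicate α i, by
      rw [Multiset.card_sub hle, hm, Multiset.card_replicate]⟩), ?_⟩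
    apply Subtype.ext
    apply Subtype.ext
    exact tsub_add_cancel_of_le hle
  have h := Nat.card_le_card_of_surjective f hf
  rw [Nat.card_prod, Nat.card_fin, Nat.card_eq_fintype_card (α := Sym (Fin d) (d - α)),
    Sym.card_sym_eq_choose, Fintype.card_fin] at h
  have e : d + (d - α) - 1 = 2 * d - α - 1 := by omega
  rwa [e] at h

lemma choose_bound (d a : ℕ) (ha : a + 1 ≤ d) :
    (2 * d - (a + 1) - 1).choose (d - (a + 1)) * 2 ^ a * (2 * d - 1)
      ≤ d * (2 * d - 1).choose (d - 1) := by
  induction a with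
  | zero =>
    obtain ⟨e, rfl⟩ : ∃ e, d = e + 1 := ⟨d - 1, by omega⟩
    have h := Nat.add_one_mul_choose_eq (2 * e) e
    have h2 : (2 * e + 1).choose (e + 1) = (2 * e + 1).choose e := by
      rw [← Nat.choose_symm_half]
    have e1 : 2 * (e + 1) - (0 + 1) - 1 = 2 * e := by omega
    have e2 : 2 * (e + 1) - 1 = 2 * e + 1 := by omega
    have e3 : e + 1 - (0 + 1) = e := by omega
    rw [e1, e2, e3]
    rw [h2] at h
    nlinarith
  | succ a ih =>
    have ih := ih (by omega)
    obtain ⟨k, rfl⟩ : ∃ k, d = k + a + 2 := ⟨d - a - 2, by omega⟩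
    have e1 : 2 * (k + a + 2) - (a + 1 + 1) - 1 = 2 * k + a + 1 := by omega
    have e2 : 2 * (k + a + 2) - (a + 1) - 1 = 2 * k + a + 1 + 1 := by omega
    have e3 : k + a + 2 - (a + 1 + 1) = k := by omega
    have e4 : k + a + 2 - (a + 1) = k + 1 := by omega
    rw [e1, e3]
    rw [e2, e4] at ih
    have h := Nat.add_one_mul_choose_eq (2 * k + a + 1) k
    have h2 : 2 * (2 * k + a + 1).choose k ≤ (2 * k + a + 1 + 1).choose (k + 1) := by
      have : (k + 1) * (2 * (2 * k + a + 1).choose k)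
          ≤ (k + 1) * (2 * k + a + 1 + 1).choose (k + 1) := by
        nlinarith [Nat.zero_le (a * (2 * k + a + 1).choose k)]
      exact Nat.le_of_mul_le_mul_left this (by omega)
    refine le_trans ?_ ih
    apply Nat.mul_le_mul_right
    rw [pow_succ]
    calc _ = (2 * (2 * k + a + 1).choose k) * 2 ^ a := by ring
      _ ≤ _ := Nat.mul_le_mul_right _ h2

lemma part1 (d : ℕ) (hd : 1 ≤ d) (α : ℕ) (h1 : 1 ≤ α) :
      (Nat.card {m : Sym (Fin d) d // ∃ i : Fin d, α ≤ Multiset.count i (m : Multiset (Fin d))} : ℚ)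
          / ((2 * d - 1).choose (d - 1) : ℚ)
        ≤ (d : ℚ) * (1 / 2) ^ (α - 1) * ((d : ℚ) / (2 * d - 1)) := by
  have hdq : (1 : ℚ) ≤ d := by exact_mod_cast hd
  have hpos : (0 : ℚ) < 2 * d - 1 := by linarith
  have hC : (0 : ℚ) < ((2 * d - 1).choose (d - 1) : ℚ) := by
    exact_mod_cast Nat.choose_pos (by omega)
  by_cases hα : α ≤ d
  · obtain ⟨a, rfl⟩ : ∃ a, α = a + 1 := ⟨α - 1, by omega⟩
    have hb := card_bound d (a + 1) hα
    have hc := choose_bound d a hα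
    have hbc := (Nat.mul_le_mul_right (2 ^ a * (2 * d - 1)) hb).trans
      (le_of_eq_of_le (by ring) (Nat.mul_le_mul_left d hc))
    have hq : (Nat.card {m : Sym (Fin d) d //
        ∃ i : Fin d, a + 1 ≤ Multiset.count i (m : Multiset (Fin d))} : ℚ)
        * (2 ^ a * (2 * d - 1)) ≤ d * (d * ((2 * d - 1).choose (d - 1) : ℚ)) := by
      have e : ((2 * d - 1 : ℕ) : ℚ) = 2 * d - 1 := by
        rw [Nat.cast_sub (by omega)]; push_cast; ring
      rw [← e]
      exact_mod_cast hbc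
    rw [Nat.add_sub_cancel, div_le_iff₀ hC]
    have hP : (0 : ℚ) < 2 ^ a * (2 * d - 1) := by positivity
    rw [← le_div_iff₀ hP] at hq
    refine hq.trans (le_of_eq ?_)
    rw [one_div, inv_pow]
    field_simp
  · have : IsEmpty {m : Sym (Fin d) d //
        ∃ i : Fin d, α ≤ Multiset.count i (m : Multiset (Fin d))} := by
      refine ⟨?_⟩
      rintro ⟨⟨m, hm⟩, i, hi⟩
      have := Multiset.count_le_card i m
      change α ≤ Multiset.count i m at hi
      omega
    rw [Nat.card_of_isEmpty]
    simp only [Nat.cast_zero, zero_div]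
    positivity

/-- For a uniformly random multiset of d elements from a d-element set, the probability
that some element has multiplicity ≥ α is at most d·(1/2)^(α-1)·d/(2d-1); in particular
for α = ⌈2 log₂ d + 1⌉ this probability is at most 1/d. -/
theorem stmt7 (d : ℕ) (hd : 1 ≤ d) :
    (∀ α : ℕ, 1 ≤ α →
      (Nat.card {m : Sym (Fin d) d // ∃ i : Fin d, α ≤ Multiset.count i (m : Multiset (Fin d))} : ℚ)
          / ((2 * d - 1).choose (d - 1) : ℚ)
        ≤ (d : ℚ) * (1 / 2) ^ (α - 1) * ((d : ℚ) / (2 * d - 1))) ∧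
    (Nat.card {m : Sym (Fin d) d //
        ∃ i : Fin d, ⌈2 * Real.logb 2 d + 1⌉₊ ≤ Multiset.count i (m : Multiset (Fin d))} : ℚ)
        / ((2 * d - 1).choose (d - 1) : ℚ) ≤ 1 / (d : ℚ) := by
  refine ⟨part1 d hd, ?_⟩
  have hdr : (1 : ℝ) ≤ d := by exact_mod_cast hd
  have hdq : (1 : ℚ) ≤ d := by exact_mod_cast hd
  have hlog : 0 ≤ Real.logb 2 d := Real.logb_nonneg (by norm_num) hdr
  have hce := Nat.le_ceil (2 * Real.logb 2 d + 1)
  generalize ⌈2 * Real.logb 2 d + 1⌉₊ = α at hce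
  have hα : 1 ≤ α := by
    have : (1 : ℝ) ≤ α := by linarith
    exact_mod_cast this
  refine (part1 d hd α hα).trans ?_
  obtain ⟨a, rfl⟩ : ∃ a, α = a + 1 := ⟨α - 1, by omega⟩
  rw [Nat.add_sub_cancel]
  have hpow : d ^ 2 ≤ 2 ^ a := by
    have h3 : Real.logb 2 ((d : ℝ) ^ 2) ≤ a := by
      rw [Real.logb_pow]; push_cast at hce ⊢; linarith
    rw [Real.logb_le_iff_le_rpow (by norm_num) (by positivity), Real.rpow_natCast] at h3
    exact_mod_cast h3
  have hpq : (d : ℚ) ^ 2 ≤ 2 ^ a := by exact_mod_cast hpow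
  have hpos : (0 : ℚ) < 2 * d - 1 := by linarith
  have hd0 : (0 : ℚ) < d := by linarith
  have e : (d : ℚ) * (1 / 2) ^ a * ((d : ℚ) / (2 * d - 1)) = d ^ 2 / (2 ^ a * (2 * d - 1)) := by
    rw [one_div, inv_pow]; field_simp
  rw [e, div_le_div_iff₀ (by positivity) hd0, one_mul]
  exact mul_le_mul hpq (by linarith) hd0.le (by positivity)
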